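/- Let θ : S → R be a ring extension admitting a reflexive homomorphism φ. Then for every left R-module X, the map t_X : Hom_R(X,R) → Hom_S(X,S) sending f to φ∘f is a bijection, and it is right S-linear (i.e. linear over Sᵒᵖ, where Hom_R(X,R) carries the right S-action (f·s)(x) = f(x)·θ(s) and Hom_S(X,S) carries the right S-action (g·s)(x) = g(x)s). -/

import Mathlib

/- STATEMENT 1: For a ring extension θ : S → R with reflexive homomorphism φ,
and any left R-module X, the map t_X : Hom_R(X,R) → Hom_S(X,S), f ↦ φ∘f,
is bijective and right S-linear. -/

universe u v w

/-- `φ : R → S` is a reflexive homomorphism for the ring extension `θ : S →+* R`: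
it is additive, `S`-bilinear with respect to `θ`, and the induced maps
`l_φ : R → Hom_S(R,S)`, `w ↦ (r ↦ φ (r * w))`, and `r_φ : R → Hom_{Sᵒᵖ}(R,S)`,
`w ↦ (r ↦ φ (w * r))`, are bijective (bijectivity onto the set of left,
resp. right, `S`-linear maps `R → S` is expressed elementwise). -/
def IsReflexiveHom {S : Type u} {R : Type v} [Ring S] [Ring R] (θ : S →+* R)
    (φ : R → S) : Prop :=
  (∀ a b : R, φ (a + b) = φ a + φ b) ∧
  (∀ (s : S) (r : R), φ (θ s * r) = s * φ r) ∧
  (∀ (s : S) (r : R), φ (r * θ s) = φ r * s) ∧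
  Function.Injective (fun w : R => (fun r : R => φ (r * w))) ∧
  (∀ g : R → S, ((∀ a b : R, g (a + b) = g a + g b) ∧
      ∀ (s : S) (r : R), g (θ s * r) = s * g r) → ∃ w : R, ∀ r, g r = φ (r * w)) ∧
  Function.Injective (fun w : R => (fun r : R => φ (w * r))) ∧
  (∀ g : R → S, ((∀ a b : R, g (a + b) = g a + g b) ∧
      ∀ (s : S) (r : R), g (r * θ s) = g r * s) → ∃ w : R, ∀ r, g r = φ (w * r))

/-!
Bijectivity of `l_φ` says that `φ` exhibits `R` as the coextension of scalars `Hom_S(R, S)`, and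
`Hom_R(X, Hom_S(R, M)) ≃ Hom_S(X, M)` holds for every `S`-module `M`. Concretely, the map `f` with
`φ ∘ f = g` sends `x` to the element representing the functional `r ↦ g (r • x)`.
-/

/-- Postcomposition with an `S`-linear map `φ : N →+ M`, as a map `Hom_R(X, N) → Hom_S(X, M)`,
where `S` acts on `N` and `X` through `θ`. It is linear over any `T` acting compatibly on `N` and
`M`; right `S`-linearity is the case `T = Sᵐᵒᵖ`. -/
def restrictScalarsPostcomp {S R T N M X : Type*} [Semiring S] [Semiring R] [Semiring T]
    [AddCommMonoid N] [AddCommMonoid M] [AddCommMonoid X] [Module R N] [Module S M]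
    [Module T N] [SMulCommClass R T N] [Module T M] [SMulCommClass S T M]
    [Module R X] [Module S X] {θ : S →+* R} {φ : N →+ M}
    (hS : ∀ (s : S) (n : N), φ (θ s • n) = s • φ n) (hT : ∀ (c : T) (n : N), φ (c • n) = c • φ n)
    (hX : ∀ (s : S) (x : X), s • x = θ s • x) : (X →ₗ[R] N) →ₗ[T] (X →ₗ[S] M) where
  toFun f :=
    { toFun := fun x => φ (f x)
      map_add' := fun x y => by rw [map_add, map_add]
      map_smul' := fun s x => by rw [hX, map_smul, hS, RingHom.id_apply] }
  map_add' f f' := LinearMap.ext fun x => map_add φ (f x) (f' x)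
  map_smul' c f := LinearMap.ext fun x => hT c (f x)

/-- An additive map `φ : N →+ M` from an `R`-module to an `S`-module exhibits `N` as the
coextension of scalars `Hom_S(R, M)` along `θ : S →+* R`: it is `S`-linear, and
`n ↦ (r ↦ φ (r • n))` is a bijection from `N` to `Hom_S(R, M)`. The `S`-actions on `N` and `R` are
written through `θ`, so that no module structures over `S` have to be chosen on them. -/
structure IsCoextension {S R N M : Type*} [Semiring S] [Semiring R] [AddCommMonoid N]
    [AddCommMonoid M] [Module R N] [Module S M] (θ : S →+* R) (φ : N →+ M) : Prop where
  map_smul : ∀ (s : S) (n : N), φ (θ s • n) = s • φ n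
  ext : ∀ {m n : N}, (∀ r : R, φ (r • m) = φ (r • n)) → m = n
  exists_apply_smul_eq : ∀ g : R →+ M, (∀ (s : S) (r : R), g (θ s * r) = s • g r) →
    ∃ n : N, ∀ r : R, φ (r • n) = g r

namespace IsCoextension

variable {S R N M X : Type*} [Semiring S] [Semiring R] [AddCommMonoid N] [AddCommMonoid M]
  [AddCommMonoid X] [Module R N] [Module S M] [Module R X] {θ : S →+* R} {φ : N →+ M}

theorem linearMap_ext (h : IsCoextension θ φ) {f f' : X →ₗ[R] N}
    (hff' : ∀ x, φ (f x) = φ (f' x)) : f = f' := by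
  ext x
  refine h.ext fun r => ?_
  simpa only [LinearMap.map_smul] using hff' (r • x)

variable [Module S X]

theorem exists_apply_smul_eq_apply_smul (h : IsCoextension θ φ)
    (hX : ∀ (s : S) (x : X), s • x = θ s • x) (g : X →ₗ[S] M) (x : X) :
    ∃ n : N, ∀ r : R, φ (r • n) = g (r • x) :=
  h.exists_apply_smul_eq (g.toAddMonoidHom.comp ((smulAddHom R X).flip x)) fun s r => by
    change g ((θ s * r) • x) = s • g (r • x)
    rw [mul_smul, ← hX, LinearMap.map_smul]

theorem exists_linearMap_apply_eq (h : IsCoextension θ φ)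
    (hX : ∀ (s : S) (x : X), s • x = θ s • x) (g : X →ₗ[S] M) :
    ∃ f : X →ₗ[R] N, ∀ x, φ (f x) = g x := by
  choose f hf using h.exists_apply_smul_eq_apply_smul hX g
  have f_add (x y : X) : f (x + y) = f x + f y :=
    h.ext fun r => by simp only [smul_add, map_add, hf]
  have f_smul (a : R) (x : X) : f (a • x) = a • f x :=
    h.ext fun r => by simp only [← mul_smul, hf]
  have f_apply (x : X) : φ (f x) = g x := by simpa only [one_smul] using hf x 1
  exact ⟨{ toFun := f, map_add' := f_add, map_smul' := f_smul }, f_apply⟩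

end IsCoextension

namespace IsReflexiveHom

variable {S R : Type*} [Ring S] [Ring R] {θ : S →+* R} {φ : R → S}

theorem isCoextension (hφ : IsReflexiveHom θ φ) :
    IsCoextension θ (AddMonoidHom.mk' φ hφ.1) := by
  obtain ⟨_, map_mul_left, _, l_injective, l_surjective, _⟩ := hφ
  refine ⟨map_mul_left, fun h => l_injective (funext h), fun g hg => ?_⟩
  obtain ⟨w, hw⟩ := l_surjective g ⟨map_add g, hg⟩
  exact ⟨w, fun r => (hw r).symm⟩

theorem map_op_smul [Module Sᵐᵒᵖ R] (hφ : IsReflexiveHom θ φ)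
    (hR : ∀ (s : S) (r : R), MulOpposite.op s • r = r * θ s) (c : Sᵐᵒᵖ) (r : R) :
    φ (c • r) = c • φ r := by
  obtain ⟨_, _, map_mul_right, _⟩ := hφ
  rw [← MulOpposite.op_unop c, hR, map_mul_right, op_smul_eq_mul]

end IsReflexiveHom

theorem hom_iso_left_general {S R T N M X : Type*} [Semiring S] [Semiring R] [Semiring T]
    [AddCommMonoid N] [AddCommMonoid M] [AddCommMonoid X] [Module R N] [Module S M]
    [Module T N] [SMulCommClass R T N] [Module T M] [SMulCommClass S T M]
    [Module R X] [Module S X] {θ : S →+* R} {φ : N →+ M} (h : IsCoextension θ φ)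
    (hT : ∀ (c : T) (n : N), φ (c • n) = c • φ n) (hX : ∀ (s : S) (x : X), s • x = θ s • x) :
    ∃ t : (X →ₗ[R] N) →ₗ[T] (X →ₗ[S] M),
      (∀ (f : X →ₗ[R] N) (x : X), t f x = φ (f x)) ∧ Function.Bijective t := by
  refine ⟨restrictScalarsPostcomp h.map_smul hT hX, fun _ _ => rfl,
    fun f f' hff' => ?_, fun g => ?_⟩
  · exact h.linearMap_ext (LinearMap.congr_fun hff')
  · obtain ⟨f, hf⟩ := h.exists_linearMap_apply_eq hX g
    exact ⟨f, LinearMap.ext hf⟩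

theorem hom_iso_left {S : Type u} {R : Type v} [Ring S] [Ring R] (θ : S →+* R)
    (φ : R → S) (hφ : IsReflexiveHom θ φ)
    -- the module structures on `X` and on `R` obtained by restriction of scalars along θ
    (X : Type w) [AddCommGroup X] [Module R X]
    [Module S X] (hX : ∀ (s : S) (x : X), s • x = θ s • x)
    [Module Sᵐᵒᵖ R] (hR' : ∀ (s : S) (r : R), MulOpposite.op s • r = r * θ s)
    [SMulCommClass R Sᵐᵒᵖ R] :
    ∃ t : (X →ₗ[R] R) → (X →ₗ[S] S),
      (∀ (f : X →ₗ[R] R) (x : X), t f x = φ (f x)) ∧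
      Function.Bijective t ∧
      -- right S-linearity of t
      ∀ (c : Sᵐᵒᵖ) (f : X →ₗ[R] R), t (c • f) = c • t f := by
  obtain ⟨t, ht, t_bijective⟩ := hom_iso_left_general hφ.isCoextension (hφ.map_op_smul hR') hX
  exact ⟨t, ht, t_bijective, t.map_smul⟩
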